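/- arXiv:math/0503468 — 5 statements merged into one kernel-verified Lean document; each statement's English description precedes it below -/
import Mathlib

section
/- Let G and H be groups, let p, q ≥ 1, and let ρ : G →* Matrix.unitaryGroup (Fin p) ℂ and σ : H →* Matrix.unitaryGroup (Fin q) ℂ be irreducible unitary representations. Then the external tensor product representation ρ ⊠ σ of G × H, of dimension p·q, is irreducible: the only ℂ-submodules of ℂ^(p·q) invariant under all matrices (ρ ⊠ σ)(g,h) are ⊥ and ⊤. -/
/-!
The proof passes through commutants. By unitarity, the orthogonal projection `P` onto an invariant
subspace commutes with the representation (`exists_commuting_projection`), so it suffices to show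
that every matrix commuting with `ρ ⊠ σ` is scalar. View such a matrix as a `q × q` array of
`p × p` blocks. Commuting with `ρ g ⊗ 1` means that each block commutes with `ρ`, so each block is
scalar by Schur's lemma (`schur`) and the matrix is `1 ⊗ B`; commuting with `1 ⊗ σ h` then means
that `B` commutes with `σ`, so `B` is scalar too. A scalar projection has range `⊥` or `⊤`.
-/

open Matrix Kronecker

/-- A submodule `W` of `ℂⁿ` is invariant under the unitary representation `ρ`. -/
def RepInvariant {G : Type*} [Group G] {n : ℕ} (ρ : G →* Matrix.unitaryGroup (Fin n) ℂ)
    (W : Submodule ℂ (Fin n → ℂ)) : Prop :=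
  ∀ (g : G), ∀ v ∈ W, (ρ g).val.mulVec v ∈ W

/-- A unitary representation is irreducible if it is at least one-dimensional and the
only invariant submodules are `⊥` and `⊤`. -/
def RepIrreducible {G : Type*} [Group G] {n : ℕ}
    (ρ : G →* Matrix.unitaryGroup (Fin n) ℂ) : Prop :=
  1 ≤ n ∧ ∀ W : Submodule ℂ (Fin n → ℂ), RepInvariant ρ W → W = ⊥ ∨ W = ⊤

/-- Unitary equivalence of two `n`-dimensional unitary representations. -/
def UnitarilyEquivalent {G : Type*} [Group G] {n : ℕ}
    (ρ ρ' : G →* Matrix.unitaryGroup (Fin n) ℂ) : Prop :=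
  ∃ A : Matrix.unitaryGroup (Fin n) ℂ, ∀ g : G, ρ' g = A * ρ g * A⁻¹

lemma kronecker_conjTranspose {p q : ℕ} (A : Matrix (Fin p) (Fin p) ℂ)
    (B : Matrix (Fin q) (Fin q) ℂ) : (A ⊗ₖ B)ᴴ = Aᴴ ⊗ₖ Bᴴ := by
  ext ⟨i, j⟩ ⟨k, l⟩
  simp [Matrix.conjTranspose_apply, mul_comm]

/-- The Kronecker product of unitary matrices, reindexed to be of size `p * q`, is unitary. -/
def kroneckerUnitary {p q : ℕ} (A : Matrix.unitaryGroup (Fin p) ℂ)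
    (B : Matrix.unitaryGroup (Fin q) ℂ) : Matrix.unitaryGroup (Fin (p * q)) ℂ :=
  ⟨Matrix.reindex finProdFinEquiv finProdFinEquiv (A.val ⊗ₖ B.val), by
    constructor
    · show star (Matrix.reindex finProdFinEquiv finProdFinEquiv (A.val ⊗ₖ B.val)) *
        (Matrix.reindex finProdFinEquiv finProdFinEquiv (A.val ⊗ₖ B.val)) = 1
      have hs : star (Matrix.reindex finProdFinEquiv finProdFinEquiv (A.val ⊗ₖ B.val)) =
          Matrix.reindex finProdFinEquiv finProdFinEquiv ((star A.val) ⊗ₖ (star B.val)) := by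
        show (Matrix.reindex finProdFinEquiv finProdFinEquiv (A.val ⊗ₖ B.val))ᴴ = _
        rw [Matrix.reindex_apply, Matrix.reindex_apply, Matrix.conjTranspose_submatrix,
          Matrix.star_eq_conjTranspose, Matrix.star_eq_conjTranspose, ← kronecker_conjTranspose]
      rw [hs, Matrix.reindex_apply, Matrix.reindex_apply, Matrix.submatrix_mul_equiv,
        ← Matrix.mul_kronecker_mul]
      have h1 : star A.val * A.val = 1 := A.2.1
      have h2 : star B.val * B.val = 1 := B.2.1
      rw [h1, h2, Matrix.one_kronecker_one, Matrix.submatrix_one_equiv]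
    · show (Matrix.reindex finProdFinEquiv finProdFinEquiv (A.val ⊗ₖ B.val)) *
        star (Matrix.reindex finProdFinEquiv finProdFinEquiv (A.val ⊗ₖ B.val)) = 1
      have hs : star (Matrix.reindex finProdFinEquiv finProdFinEquiv (A.val ⊗ₖ B.val)) =
          Matrix.reindex finProdFinEquiv finProdFinEquiv ((star A.val) ⊗ₖ (star B.val)) := by
        show (Matrix.reindex finProdFinEquiv finProdFinEquiv (A.val ⊗ₖ B.val))ᴴ = _
        rw [Matrix.reindex_apply, Matrix.reindex_apply, Matrix.conjTranspose_submatrix,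
          Matrix.star_eq_conjTranspose, Matrix.star_eq_conjTranspose, ← kronecker_conjTranspose]
      rw [hs, Matrix.reindex_apply, Matrix.reindex_apply, Matrix.submatrix_mul_equiv,
        ← Matrix.mul_kronecker_mul]
      have h1 : A.val * star A.val = 1 := A.2.2
      have h2 : B.val * star B.val = 1 := B.2.2
      rw [h1, h2, Matrix.one_kronecker_one, Matrix.submatrix_one_equiv]⟩

/-- The external tensor product of unitary representations. -/
def extTensor {G H : Type*} [Group G] [Group H] {p q : ℕ}
    (ρ : G →* Matrix.unitaryGroup (Fin p) ℂ) (σ : H →* Matrix.unitaryGroup (Fin q) ℂ) :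
    (G × H) →* Matrix.unitaryGroup (Fin (p * q)) ℂ where
  toFun x := kroneckerUnitary (ρ x.1) (σ x.2)
  map_one' := by
    apply Subtype.ext
    show Matrix.reindex finProdFinEquiv finProdFinEquiv ((ρ 1).val ⊗ₖ (σ 1).val) = 1
    rw [map_one ρ, map_one σ]
    show Matrix.reindex finProdFinEquiv finProdFinEquiv
      ((1 : Matrix (Fin p) (Fin p) ℂ) ⊗ₖ (1 : Matrix (Fin q) (Fin q) ℂ)) = 1
    rw [Matrix.one_kronecker_one, Matrix.reindex_apply, Matrix.submatrix_one_equiv]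
  map_mul' x y := by
    apply Subtype.ext
    show Matrix.reindex finProdFinEquiv finProdFinEquiv ((ρ (x.1 * y.1)).val ⊗ₖ (σ (x.2 * y.2)).val)
      = Matrix.reindex finProdFinEquiv finProdFinEquiv ((ρ x.1).val ⊗ₖ (σ x.2).val) *
        Matrix.reindex finProdFinEquiv finProdFinEquiv ((ρ y.1).val ⊗ₖ (σ y.2).val)
    rw [map_mul ρ, map_mul σ]
    rw [Matrix.reindex_apply, Matrix.reindex_apply, Matrix.reindex_apply,
      Matrix.submatrix_mul_equiv, ← Matrix.mul_kronecker_mul]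
    rfl

/-- Transport of a unitary representation along an equality of dimensions. -/
def transportRep {G : Type*} [Group G] {m n : ℕ} (h : m = n)
    (ρ : G →* Matrix.unitaryGroup (Fin m) ℂ) : G →* Matrix.unitaryGroup (Fin n) ℂ :=
  h ▸ ρ

/-- Schur's lemma: an eigenspace of `A` is a nonzero invariant subspace. -/
lemma schur {G : Type*} [Group G] {n : ℕ} {ρ : G →* Matrix.unitaryGroup (Fin n) ℂ}
    (hρ : RepIrreducible ρ) (A : Matrix (Fin n) (Fin n) ℂ)
    (hA : ∀ g, (ρ g).val * A = A * (ρ g).val) : ∃ c : ℂ, A = c • 1 := by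
  have : Nonempty (Fin n) := ⟨⟨0, hρ.1⟩⟩
  obtain ⟨c, hc⟩ := Module.End.exists_eigenvalue (Matrix.toLin' A)
  refine ⟨c, ?_⟩
  have hinv : RepInvariant ρ (Module.End.eigenspace (Matrix.toLin' A) c) := by
    intro g v hv
    rw [Module.End.mem_eigenspace_iff, Matrix.toLin'_apply] at hv ⊢
    rw [Matrix.mulVec_mulVec, ← hA, ← Matrix.mulVec_mulVec, hv, Matrix.mulVec_smul]
  have htop := (hρ.2 _ hinv).resolve_left hc
  apply Matrix.toLin'.injective
  ext1 i
  ext1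
  have h : (Pi.single i 1 : Fin n → ℂ) ∈ Module.End.eigenspace (Matrix.toLin' A) c := by
    rw [htop]; trivial
  rw [Module.End.mem_eigenspace_iff] at h
  simpa using h

/-- The matrix of the orthogonal projection onto `W`, characterised through the standard
Hermitian form on `Fin n → ℂ`. -/
lemma exists_orthogonal_projection {n : ℕ} (W : Submodule ℂ (Fin n → ℂ)) :
    ∃ P : Matrix (Fin n) (Fin n) ℂ, (∀ v, P *ᵥ v ∈ W) ∧
      ∀ v, ∀ w ∈ W, star w ⬝ᵥ (v - P *ᵥ v) = 0 := by
  let e := WithLp.linearEquiv 2 ℂ (Fin n → ℂ)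
  let K : Submodule ℂ (EuclideanSpace ℂ (Fin n)) := W.comap e.toLinearMap
  let T : (Fin n → ℂ) →ₗ[ℂ] (Fin n → ℂ) :=
    e.toLinearMap ∘ₗ K.starProjection.toLinearMap ∘ₗ e.symm.toLinearMap
  refine ⟨LinearMap.toMatrix' T, fun v => ?_, fun v w hw => ?_⟩
  · rw [LinearMap.toMatrix'_mulVec]
    exact K.starProjection_apply_mem (e.symm v)
  · rw [LinearMap.toMatrix'_mulVec]
    have h := K.sub_starProjection_mem_orthogonal (e.symm v) (e.symm w) (by simpa [K] using hw)
    rw [EuclideanSpace.inner_eq_star_dotProduct, dotProduct_comm] at h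
    exact h

open scoped ComplexOrder in
/-- The projection onto an invariant subspace can be chosen in the commutant: the orthogonal
projection works, because the adjoint of `ρ g` is `ρ g⁻¹`, which preserves `W`. -/
lemma exists_commuting_projection {G : Type*} [Group G] {n : ℕ}
    {ρ : G →* Matrix.unitaryGroup (Fin n) ℂ} {W : Submodule ℂ (Fin n → ℂ)}
    (hW : RepInvariant ρ W) :
    ∃ P : Matrix (Fin n) (Fin n) ℂ, (∀ v, P *ᵥ v ∈ W) ∧ (∀ w ∈ W, P *ᵥ w = w) ∧
      ∀ g, (ρ g).val * P = P * (ρ g).val := by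
  obtain ⟨P, hP, hort⟩ := exists_orthogonal_projection W
  have key : ∀ v, ∀ u ∈ W, (∀ w ∈ W, star w ⬝ᵥ (v - u) = 0) → P *ᵥ v = u := by
    intro v u hu h
    have hd : P *ᵥ v - u ∈ W := W.sub_mem (hP v) hu
    have h1 := h _ hd
    have h2 := hort v _ hd
    rw [← sub_eq_zero, ← dotProduct_star_self_eq_zero]
    have h3 : P *ᵥ v - u = (v - u) - (v - P *ᵥ v) := by abel
    calc star (P *ᵥ v - u) ⬝ᵥ (P *ᵥ v - u)
        = star (P *ᵥ v - u) ⬝ᵥ ((v - u) - (v - P *ᵥ v)) := by rw [← h3]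
      _ = 0 := by rw [dotProduct_sub, h1, h2, sub_zero]
  refine ⟨P, hP, fun w hw => key w w hw (by simp), fun g => ?_⟩
  apply Matrix.toLin'.injective
  ext1 i
  ext1
  simp only [LinearMap.comp_apply, Matrix.toLin'_apply, ← Matrix.mulVec_mulVec]
  rw [key ((ρ g).val *ᵥ _) _ (hW g _ (hP _))]
  intro w hw
  have hg := hW g⁻¹ w hw
  rw [map_inv] at hg
  have h := hort (LinearMap.single ℂ (fun _ => ℂ) i 1) _ hg
  rw [← Matrix.mulVec_sub, Matrix.dotProduct_mulVec]
  rw [Matrix.star_mulVec] at h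
  have h4 : ((ρ g)⁻¹).valᴴ = (ρ g).val := by
    rw [Matrix.UnitaryGroup.inv_val, Matrix.star_eq_conjTranspose,
      Matrix.conjTranspose_conjTranspose]
  rwa [h4] at h

/-- The commutant of `ρ ⊠ σ`, on the product index type, consists of scalars. -/
lemma kronecker_commutant {G H : Type*} [Group G] [Group H] {p q : ℕ}
    {ρ : G →* Matrix.unitaryGroup (Fin p) ℂ} {σ : H →* Matrix.unitaryGroup (Fin q) ℂ}
    (hρ : RepIrreducible ρ) (hσ : RepIrreducible σ)
    (Q : Matrix (Fin p × Fin q) (Fin p × Fin q) ℂ)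
    (hQ : ∀ g h, ((ρ g).val ⊗ₖ (σ h).val) * Q = Q * ((ρ g).val ⊗ₖ (σ h).val)) :
    ∃ c : ℂ, Q = c • 1 := by
  have hblock : ∀ j l, ∃ c : ℂ, Q.submatrix (fun i => (i, j)) (fun k => (k, l)) = c • 1 := by
    intro j l
    refine schur hρ _ fun g => ?_
    ext i k
    have h := congrFun (congrFun (hQ g 1) (i, j)) (k, l)
    simpa [Matrix.mul_apply, Fintype.sum_prod_type, Matrix.one_apply] using h
  choose B hB using hblock
  have hQB : ∀ i j k l, Q (i, j) (k, l) = if i = k then B j l else 0 := by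
    intro i j k l
    have h := congrFun (congrFun (hB j l) i) k
    simpa [Matrix.one_apply] using h
  obtain ⟨c, hc⟩ := schur hσ (Matrix.of B) fun x => by
    ext j l
    let i : Fin p := ⟨0, hρ.1⟩
    have h := congrFun (congrFun (hQ 1 x) (i, j)) (i, l)
    simpa [Matrix.mul_apply, Fintype.sum_prod_type, Matrix.one_apply, hQB] using h
  refine ⟨c, ?_⟩
  ext ⟨i, j⟩ ⟨k, l⟩
  have h := congrFun (congrFun hc j) l
  rw [Matrix.of_apply] at h
  rw [hQB, h]
  simp [Matrix.one_apply, ite_and]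

/-- The external tensor product of irreducible unitary representations of
`G` and `H` is an irreducible unitary representation of `G × H`. -/
theorem extTensor_irreducible {G H : Type*} [Group G] [Group H] {p q : ℕ}
    (hp : 1 ≤ p) (hq : 1 ≤ q)
    (ρ : G →* Matrix.unitaryGroup (Fin p) ℂ) (σ : H →* Matrix.unitaryGroup (Fin q) ℂ)
    (hρ : RepIrreducible ρ) (hσ : RepIrreducible σ) :
    RepIrreducible (extTensor ρ σ) := by
  refine ⟨Nat.mul_pos hp hq, fun W hW => ?_⟩
  obtain ⟨P, hPW, hPid, hcomm⟩ := exists_commuting_projection hW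
  let e : Fin p × Fin q ≃ Fin (p * q) := finProdFinEquiv
  obtain ⟨c, hc⟩ := kronecker_commutant hρ hσ (P.submatrix e e) fun g x => by
    have h : Matrix.reindex e e ((ρ g).val ⊗ₖ (σ x).val) * P =
        P * Matrix.reindex e e ((ρ g).val ⊗ₖ (σ x).val) := hcomm (g, x)
    have h' := congrArg (fun M => M.submatrix e e) h
    simpa [← Matrix.submatrix_mul_equiv _ _ e e e] using h'
  have hP : P = c • 1 := by
    have h := congrArg (fun M => M.submatrix e.symm e.symm) hc
    simpa [Matrix.submatrix_smul] using h
  by_cases h0 : c = 0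
  · left
    rw [eq_bot_iff]
    intro w hw
    have h := hPid w hw
    simpa [hP, h0, eq_comm] using h
  · right
    rw [eq_top_iff]
    intro v _
    have h := hPW (c⁻¹ • v)
    simpa [hP, Matrix.smul_mulVec, h0] using h
end

section
/- Let G and H be groups, n ≥ 1, and let ρ : (G × H) →* Matrix.unitaryGroup (Fin n) ℂ be an irreducible unitary representation. Then there exist p, q ≥ 1 with p * q = n, an irreducible unitary representation σ : G →* Matrix.unitaryGroup (Fin p) ℂ, and an irreducible unitary representation τ : H →* Matrix.unitaryGroup (Fin q) ℂ, such that ρ is unitarily equivalent to the external tensor product σ ⊠ τ (transported along Fin (p*q) ≃ Fin n). -/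
/-!
Restrict `ρ` to `G` and choose an irreducible subrepresentation `σ` of dimension `p`
(`exists_irreducible_subrep`). The group `H` commutes with `G`, hence acts by left multiplication on
the space `M = Hom_G(σ, ρ)` of intertwining `n × p` matrices; in a basis of `M` orthonormal for the
trace form this action is a unitary representation `τ` of dimension `q ≥ 1`. For `X, Y ∈ M` the
matrix `Xᴴ Y` commutes with `σ`, so it is scalar by Schur's lemma. Consequently the evaluation map
`ℂᵖ ⊗ M → ℂⁿ`, `u ⊗ X ↦ X u`, is isometric up to the factor `√p`, and it intertwines `σ ⊠ τ` with
`ρ` (`exists_tensor_isometry`). Its range is a nonzero invariant subspace, hence all of `ℂⁿ` by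
irreducibility of `ρ`; thus `p * q = n` and the map is a unitary equivalence. Finally `τ` is
irreducible because an invariant subspace `W` of `τ` gives the invariant subspace `ℂᵖ ⊗ W` of `ρ`
(`right_factor_irreducible`).
-/

open Matrix Kronecker

/-- An orthonormal basis of an invariant subspace `W`, written as the columns of `T`, turns the
restriction of `ρ` to `W` into a unitary matrix representation. The index type `ι` is arbitrary
because the lemma is applied to `Fin n` and to `Fin n × Fin p`. -/
lemma exists_isometry_of_invariant {G ι : Type*} [Group G] [Fintype ι] [DecidableEq ι]
    (ρ : G →* Matrix.unitaryGroup ι ℂ) (W : Submodule ℂ (ι → ℂ))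
    (hW : ∀ g, ∀ v ∈ W, (ρ g).val.mulVec v ∈ W) :
    ∃ (d : ℕ) (T : Matrix ι (Fin d) ℂ) (σ : G →* Matrix.unitaryGroup (Fin d) ℂ),
      Tᴴ * T = 1 ∧ LinearMap.range T.mulVecLin = W ∧ ∀ g, (ρ g).val * T = T * (σ g).val := by
  classical
  let e := (WithLp.linearEquiv 2 ℂ (ι → ℂ)).symm
  let W' : Submodule ℂ (EuclideanSpace ℂ ι) := W.map e.toLinearMap
  let b := stdOrthonormalBasis ℂ W'
  let T : Matrix ι (Fin (Module.finrank ℂ W')) ℂ := Matrix.of fun i j => (b j : EuclideanSpace ℂ ι) i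
  have hT : Tᴴ * T = 1 := by
    ext j k
    have h := orthonormal_iff_ite.mp b.orthonormal j k
    rw [Submodule.coe_inner, PiLp.inner_apply] at h
    simp only [Matrix.mul_apply, Matrix.conjTranspose_apply, Matrix.one_apply, ← h]
    refine Finset.sum_congr rfl fun i _ => ?_
    simp [T, mul_comm]
  have hcol (j) : T.col j ∈ W := by
    obtain ⟨w, hw, hwb⟩ := (b j).2
    have : T.col j = w := by
      ext i
      change (b j : EuclideanSpace ℂ ι) i = w i
      rw [← hwb]
      rfl
    rwa [this]
  have hrange : LinearMap.range T.mulVecLin = W := by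
    apply le_antisymm
    · rw [Matrix.range_mulVecLin, Submodule.span_le]
      rintro _ ⟨j, rfl⟩
      exact hcol j
    · intro w hw
      let x : W' := ⟨e w, w, hw, rfl⟩
      refine ⟨fun j => b.repr x j, ?_⟩
      ext i
      have h : ((∑ j, b.repr x j • b j : W') : EuclideanSpace ℂ ι) i = w i := by
        rw [b.sum_repr]; rfl
      rw [← h]
      simp [Matrix.mulVec, dotProduct, T, mul_comm]
  have hproj (w) (hw : w ∈ W) : (T * Tᴴ).mulVec w = w := by
    rw [← hrange] at hw
    obtain ⟨c, rfl⟩ := hw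
    rw [Matrix.mulVecLin_apply, Matrix.mulVec_mulVec, Matrix.mul_assoc, hT, Matrix.mul_one]
  have hinter (g) : (ρ g).val * T = T * (Tᴴ * (ρ g).val * T) := by
    ext i j
    have h := congrFun (hproj _ (hW g _ (hcol j))) i
    have h2 : (ρ g).val.mulVec (T.col j) = ((ρ g).val * T).col j := by
      ext i; rfl
    rw [h2] at h
    rw [show T * (Tᴴ * (ρ g).val * T) = (T * Tᴴ) * ((ρ g).val * T) by
      simp only [Matrix.mul_assoc]]
    exact h.symm
  have hmul (g g') : Tᴴ * (ρ (g * g')).val * T =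
      (Tᴴ * (ρ g).val * T) * (Tᴴ * (ρ g').val * T) := by
    have h1 : (ρ (g * g')).val = (ρ g).val * (ρ g').val := by rw [map_mul]; rfl
    rw [h1, Matrix.mul_assoc, Matrix.mul_assoc, hinter g']
    simp only [Matrix.mul_assoc]
  have hone : Tᴴ * (ρ 1).val * T = 1 := by
    rw [map_one]
    change Tᴴ * 1 * T = 1
    rw [Matrix.mul_one, hT]
  have hstar (g) : (Tᴴ * (ρ g).val * T)ᴴ = Tᴴ * (ρ g⁻¹).val * T := by
    have h1 : (ρ g⁻¹).val = (ρ g).valᴴ := by rw [map_inv]; rfl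
    rw [h1]
    simp [Matrix.conjTranspose_mul, Matrix.mul_assoc]
  refine ⟨_, T,
    { toFun := fun g => ⟨Tᴴ * (ρ g).val * T, ?_⟩
      map_one' := Subtype.ext hone
      map_mul' := fun g g' => Subtype.ext (hmul g g') }, hT, hrange, hinter⟩
  rw [Matrix.mem_unitaryGroup_iff, Matrix.star_eq_conjTranspose, hstar, ← hmul, mul_inv_cancel,
    hone]

/-- Schur's lemma: a matrix commuting with an irreducible representation is scalar, since its
eigenspaces are invariant. -/
lemma schur_scalar {G : Type*} [Group G] {p : ℕ} (σ : G →* Matrix.unitaryGroup (Fin p) ℂ)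
    (hσ : RepIrreducible σ) (C : Matrix (Fin p) (Fin p) ℂ)
    (hC : ∀ g, (σ g).val * C = C * (σ g).val) :
    ∃ c : ℂ, C = c • (1 : Matrix (Fin p) (Fin p) ℂ) := by
  have : Nonempty (Fin p) := ⟨⟨0, hσ.1⟩⟩
  obtain ⟨μ, hμ⟩ := Module.End.exists_eigenvalue C.mulVecLin
  have hinv : RepInvariant σ (Module.End.eigenspace C.mulVecLin μ) := by
    intro g v hv
    rw [Module.End.mem_eigenspace_iff, Matrix.mulVecLin_apply] at hv ⊢
    rw [Matrix.mulVec_mulVec, ← hC, ← Matrix.mulVec_mulVec, hv, Matrix.mulVec_smul]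
  refine ⟨μ, ?_⟩
  have htop := (hσ.2 _ hinv).resolve_left hμ
  apply Matrix.mulVec_injective
  ext v i
  have hv : v ∈ Module.End.eigenspace C.mulVecLin μ := htop ▸ Submodule.mem_top
  rw [Module.End.mem_eigenspace_iff, Matrix.mulVecLin_apply] at hv
  rw [hv, Matrix.smul_mulVec, Matrix.one_mulVec]

lemma mulVec_injective_of_isometry {ι κ : Type*} [Fintype ι] [Fintype κ] [DecidableEq κ]
    {T : Matrix ι κ ℂ} (hT : Tᴴ * T = 1) : Function.Injective T.mulVecLin := by
  intro v w h
  have h2 := congrArg Tᴴ.mulVec h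
  simpa [Matrix.mulVec_mulVec, hT] using h2

/-- Every nonzero representation contains an irreducible one, found by minimizing the dimension `p`
of the source of an isometric intertwiner `T`. -/
lemma exists_irreducible_subrep {G : Type*} [Group G] {n : ℕ} (hn : 1 ≤ n)
    (ρ : G →* Matrix.unitaryGroup (Fin n) ℂ) :
    ∃ (p : ℕ) (T : Matrix (Fin n) (Fin p) ℂ) (σ : G →* Matrix.unitaryGroup (Fin p) ℂ),
      Tᴴ * T = 1 ∧ (∀ g, (ρ g).val * T = T * (σ g).val) ∧ RepIrreducible σ := by
  classical
  have hex : ∃ p, 1 ≤ p ∧ ∃ (T : Matrix (Fin n) (Fin p) ℂ)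
      (σ : G →* Matrix.unitaryGroup (Fin p) ℂ),
      Tᴴ * T = 1 ∧ ∀ g, (ρ g).val * T = T * (σ g).val :=
    ⟨n, hn, 1, ρ, by simp, fun g => by simp⟩
  obtain ⟨hp, T, σ, hT, hTσ⟩ := Nat.find_spec hex
  refine ⟨_, T, σ, hT, hTσ, hp, fun W hW => ?_⟩
  obtain ⟨d, Z, σ', hZ, hZr, hZσ⟩ := exists_isometry_of_invariant σ W hW
  have hd : Module.finrank ℂ W = d := by
    rw [← hZr, LinearMap.finrank_range_of_inj (mulVec_injective_of_isometry hZ)]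
    simp
  rcases Nat.eq_zero_or_pos d with h0 | h0
  · left
    exact Submodule.finrank_eq_zero.mp (hd.trans h0)
  · right
    have hle : Nat.find hex ≤ d := by
      refine Nat.find_min' hex ⟨h0, T * Z, σ', ?_, fun g => ?_⟩
      · rw [Matrix.conjTranspose_mul, Matrix.mul_assoc, ← Matrix.mul_assoc Tᴴ, hT, Matrix.one_mul,
          hZ]
      · rw [← Matrix.mul_assoc, hTσ, Matrix.mul_assoc, hZσ, Matrix.mul_assoc]
    apply Submodule.eq_top_of_finrank_eq
    apply le_antisymm (Submodule.finrank_le _)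
    rw [hd]
    simpa using hle

/-- The action of `H` on `n × p` matrices by left multiplication, `X ↦ S h * X`. A matrix is encoded
as a vector indexed by `Fin n × Fin p`, so that the action is by the unitary matrix `S h ⊗ 1`. -/
def multiplicityRep {H : Type*} [Group H] {n : ℕ} (S : H →* Matrix.unitaryGroup (Fin n) ℂ)
    (p : ℕ) : H →* Matrix.unitaryGroup (Fin n × Fin p) ℂ where
  toFun h := ⟨(S h).val ⊗ₖ (1 : Matrix (Fin p) (Fin p) ℂ), by
    rw [Matrix.mem_unitaryGroup_iff, Matrix.star_eq_conjTranspose, kronecker_conjTranspose,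
      ← Matrix.mul_kronecker_mul, ← Matrix.star_eq_conjTranspose,
      Matrix.mem_unitaryGroup_iff.mp (S h).2, Matrix.conjTranspose_one, Matrix.mul_one,
      Matrix.one_kronecker_one]⟩
  map_one' := Subtype.ext (by
    rw [map_one]
    exact Matrix.one_kronecker_one)
  map_mul' h h' := Subtype.ext (by
    rw [map_mul]
    change ((S h).val * (S h').val) ⊗ₖ _ = ((S h).val ⊗ₖ _) * ((S h').val ⊗ₖ _)
    rw [← Matrix.mul_kronecker_mul, Matrix.mul_one])

lemma multiplicityRep_mulVec {H : Type*} [Group H] {n p : ℕ}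
    (S : H →* Matrix.unitaryGroup (Fin n) ℂ) (h : H) (x : Fin n × Fin p → ℂ) :
    Matrix.of (fun a i => (multiplicityRep S p h).val.mulVec x (a, i)) =
      (S h).val * Matrix.of (fun a i => x (a, i)) := by
  ext a i
  simp [multiplicityRep, Matrix.mulVec, dotProduct, Fintype.sum_prod_type, Matrix.mul_apply,
    Matrix.one_apply]

/-- The space `Hom_G(σ, R)` of intertwining `n × p` matrices, encoded as vectors indexed by
`Fin n × Fin p`. -/
def intertwiners {G : Type*} [Group G] {n p : ℕ} (R : G →* Matrix.unitaryGroup (Fin n) ℂ)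
    (σ : G →* Matrix.unitaryGroup (Fin p) ℂ) : Submodule ℂ (Fin n × Fin p → ℂ) where
  carrier := {x | ∀ g, (R g).val * Matrix.of (fun a i => x (a, i)) =
    Matrix.of (fun a i => x (a, i)) * (σ g).val}
  zero_mem' := fun g => by
    change (R g).val * 0 = 0 * (σ g).val
    simp
  add_mem' := fun {x y} hx hy g => by
    change (R g).val * (Matrix.of (fun a i => x (a, i)) + Matrix.of (fun a i => y (a, i))) =
      (Matrix.of (fun a i => x (a, i)) + Matrix.of (fun a i => y (a, i))) * (σ g).val
    rw [Matrix.mul_add, Matrix.add_mul, hx g, hy g]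
  smul_mem' := fun c x hx g => by
    change (R g).val * (c • Matrix.of (fun a i => x (a, i))) =
      (c • Matrix.of (fun a i => x (a, i))) * (σ g).val
    rw [Matrix.mul_smul, Matrix.smul_mul, hx g]

/-- By Schur's lemma, `(X, Y) ↦ Xᴴ * Y` is a scalar-valued form on the intertwiners from an
irreducible representation. -/
lemma intertwiner_conjTranspose_mul {G : Type*} [Group G] {n p : ℕ}
    (R : G →* Matrix.unitaryGroup (Fin n) ℂ) (σ : G →* Matrix.unitaryGroup (Fin p) ℂ)
    (hσ : RepIrreducible σ) {X Y : Matrix (Fin n) (Fin p) ℂ}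
    (hX : ∀ g, (R g).val * X = X * (σ g).val) (hY : ∀ g, (R g).val * Y = Y * (σ g).val) :
    ∃ c : ℂ, Xᴴ * Y = c • (1 : Matrix (Fin p) (Fin p) ℂ) := by
  refine schur_scalar σ hσ _ fun g => ?_
  have h1 := congrArg Matrix.conjTranspose (hX g⁻¹)
  have hR : (R g⁻¹).valᴴ = (R g).val := by
    rw [map_inv]
    exact Matrix.conjTranspose_conjTranspose _
  have hS : (σ g⁻¹).valᴴ = (σ g).val := by
    rw [map_inv]
    exact Matrix.conjTranspose_conjTranspose _
  rw [Matrix.conjTranspose_mul, Matrix.conjTranspose_mul, hR, hS] at h1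
  rw [← Matrix.mul_assoc, ← h1, Matrix.mul_assoc, hY, Matrix.mul_assoc]

/-- The evaluation map `σ ⊗ Hom_G(σ, ρ) → ρ`, `u ⊗ X ↦ X u`, as an isometric intertwiner `U` of
`G × H`-representations, where `σ` is an irreducible constituent of the restriction of `ρ` to `G`. -/
lemma exists_tensor_isometry {G H : Type*} [Group G] [Group H] {n : ℕ}
    (hn : 1 ≤ n) (ρ : (G × H) →* Matrix.unitaryGroup (Fin n) ℂ) :
    ∃ (p q : ℕ) (σ : G →* Matrix.unitaryGroup (Fin p) ℂ) (τ : H →* Matrix.unitaryGroup (Fin q) ℂ)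
      (U : Matrix (Fin n) (Fin p × Fin q) ℂ), RepIrreducible σ ∧ 1 ≤ q ∧ Uᴴ * U = 1 ∧
      ∀ x, (ρ x).val * U = U * ((σ x.1).val ⊗ₖ (τ x.2).val) := by
  classical
  let R : G →* Matrix.unitaryGroup (Fin n) ℂ := ρ.comp (MonoidHom.inl G H)
  let S : H →* Matrix.unitaryGroup (Fin n) ℂ := ρ.comp (MonoidHom.inr G H)
  have hfac (x : G × H) : (ρ x).val = (R x.1).val * (S x.2).val := by
    change _ = ((ρ (x.1, 1) * ρ (1, x.2) : Matrix.unitaryGroup (Fin n) ℂ)).val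
    rw [← map_mul]
    simp
  have hcomm (g : G) (h : H) : (S h).val * (R g).val = (R g).val * (S h).val := by
    change (ρ (1, h) * ρ (g, 1) : Matrix.unitaryGroup (Fin n) ℂ).val =
      (ρ (g, 1) * ρ (1, h) : Matrix.unitaryGroup (Fin n) ℂ).val
    rw [← map_mul, ← map_mul]
    simp
  obtain ⟨p, T, σ, hT, hTσ, hσ⟩ := exists_irreducible_subrep hn R
  obtain ⟨q, Z, τ, hZ, hZr, hZτ⟩ := exists_isometry_of_invariant (multiplicityRep S p)
    (intertwiners R σ) (by
      intro h x hx g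
      rw [multiplicityRep_mulVec, ← Matrix.mul_assoc, ← hcomm, Matrix.mul_assoc, hx g,
        Matrix.mul_assoc])
  have hp : (p : ℂ) ≠ 0 := Nat.cast_ne_zero.mpr (by have := hσ.1; omega)
  let X (j : Fin q) : Matrix (Fin n) (Fin p) ℂ := Matrix.of fun a i => Z (a, i) j
  have hX (j) : ∀ g, (R g).val * X j = X j * (σ g).val := by
    have : Z.col j ∈ intertwiners R σ := by
      rw [← hZr, Matrix.range_mulVecLin]
      exact Submodule.subset_span ⟨j, rfl⟩
    exact this
  have hSX (h a k l) : ∑ b, (S h).val a b * Z (b, k) l = ∑ j, Z (a, k) j * (τ h).val j l := by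
    have := congrFun (congrFun (hZτ h) (a, k)) l
    simpa [multiplicityRep, Matrix.mul_apply, Fintype.sum_prod_type, Matrix.one_apply] using this
  have hXX (j l) : (X j)ᴴ * X l = ((if j = l then 1 else 0 : ℂ) / p) • 1 := by
    obtain ⟨c, hc⟩ := intertwiner_conjTranspose_mul R σ hσ (hX j) (hX l)
    have htr : p * c = if j = l then 1 else 0 := by
      have h1 := congrArg Matrix.trace hc
      rw [Matrix.trace_smul, Matrix.trace_one, Fintype.card_fin, smul_eq_mul, mul_comm] at h1
      have h2 := congrFun (congrFun hZ j) l
      rw [Matrix.one_apply] at h2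
      rw [← h1, ← h2]
      simp only [Matrix.trace, Matrix.diag, Matrix.mul_apply, Fintype.sum_prod_type,
        Matrix.conjTranspose_apply]
      exact Finset.sum_comm
    rw [hc, ← htr, mul_div_cancel_left₀ _ hp]
  -- The columns of `Z` are normalized for the trace form, so `(X j)ᴴ * X j = 1 / p`; rescaling by
  -- `√p` makes the evaluation map isometric.
  let s : ℂ := ((Real.sqrt p : ℝ) : ℂ)
  have hs : star s * s = p := by
    simp only [s, Complex.star_def, Complex.conj_ofReal, ← Complex.ofReal_mul]
    rw [Real.mul_self_sqrt (Nat.cast_nonneg p)]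
    simp
  let U : Matrix (Fin n) (Fin p × Fin q) ℂ := Matrix.of fun a x => s * Z (a, x.1) x.2
  refine ⟨p, q, σ, τ, U, hσ, ?_, ?_, ?_⟩
  · -- The intertwiners contain `T ≠ 0`, so they are not zero-dimensional.
    by_contra hq
    have hq0 : q = 0 := by omega
    subst hq0
    have hmem : (fun x : Fin n × Fin p => T x.1 x.2) ∈ intertwiners R σ := hTσ
    rw [← hZr] at hmem
    obtain ⟨c, hc⟩ := hmem
    have hT0 : T = 0 := by
      ext a i
      have := congrFun hc (a, i)
      simpa [Matrix.mulVec, dotProduct] using this.symm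
    have h1 := congrFun (congrFun hT ⟨0, hσ.1⟩) ⟨0, hσ.1⟩
    simp [hT0] at h1
  · ext ⟨i, j⟩ ⟨k, l⟩
    have h1 := congrFun (congrFun (hXX j l) i) k
    have h2 : (Uᴴ * U) (i, j) (k, l) = p * ((X j)ᴴ * X l) i k := by
      rw [← hs, Matrix.mul_apply, Matrix.mul_apply, Finset.mul_sum]
      refine Finset.sum_congr rfl fun a _ => ?_
      simp only [Matrix.conjTranspose_apply, U, X, Matrix.of_apply, star_mul]
      ring
    rw [h2, h1, Matrix.smul_apply, smul_eq_mul, ← mul_assoc, mul_div_cancel₀ _ hp,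
      Matrix.one_apply, Matrix.one_apply]
    by_cases hjl : j = l <;> by_cases hik : i = k <;> simp [hjl, hik]
  · intro x
    have hS : (S x.2).val * U = U * ((1 : Matrix (Fin p) (Fin p) ℂ) ⊗ₖ (τ x.2).val) := by
      ext a ⟨k, l⟩
      have h1 : ((S x.2).val * U) a (k, l) = s * ∑ b, (S x.2).val a b * Z (b, k) l := by
        rw [Matrix.mul_apply, Finset.mul_sum]
        refine Finset.sum_congr rfl fun b _ => ?_
        simp only [U, Matrix.of_apply]
        ring
      rw [h1, hSX, Finset.mul_sum]
      simp [U, Matrix.mul_apply, Fintype.sum_prod_type_right, Matrix.one_apply, mul_assoc]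
    have hR : (R x.1).val * U = U * ((σ x.1).val ⊗ₖ (1 : Matrix (Fin q) (Fin q) ℂ)) := by
      ext a ⟨k, l⟩
      have h1 : ((R x.1).val * U) a (k, l) = s * ((R x.1).val * X l) a k := by
        rw [Matrix.mul_apply, Matrix.mul_apply, Finset.mul_sum]
        refine Finset.sum_congr rfl fun b _ => ?_
        simp only [U, X, Matrix.of_apply]
        ring
      rw [h1, hX, Matrix.mul_apply, Finset.mul_sum]
      simp [U, X, Matrix.mul_apply, Fintype.sum_prod_type, Matrix.one_apply, mul_assoc]
    rw [hfac, Matrix.mul_assoc, hS, ← Matrix.mul_assoc, hR, Matrix.mul_assoc,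
      ← Matrix.mul_kronecker_mul, Matrix.mul_one, Matrix.one_mul]

/-- If `ρ ≅ σ ⊠ τ` is irreducible then so is `τ`: an invariant subspace `W` for `τ` yields the
invariant subspace `ℂᵖ ⊗ W` for `ρ`. -/
lemma right_factor_irreducible {G H : Type*} [Group G] [Group H] {n p q : ℕ}
    {ρ : (G × H) →* Matrix.unitaryGroup (Fin n) ℂ} (hρ : RepIrreducible ρ)
    {σ : G →* Matrix.unitaryGroup (Fin p) ℂ} {τ : H →* Matrix.unitaryGroup (Fin q) ℂ}
    {U : Matrix (Fin n) (Fin p × Fin q) ℂ} (hp : 1 ≤ p) (hq : 1 ≤ q)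
    (hU : Uᴴ * U = 1) (hU' : U * Uᴴ = 1)
    (hinter : ∀ x, (ρ x).val * U = U * ((σ x.1).val ⊗ₖ (τ x.2).val)) : RepIrreducible τ := by
  refine ⟨hq, fun W hW => ?_⟩
  let P (i : Fin p) : (Fin n → ℂ) →ₗ[ℂ] (Fin q → ℂ) :=
    (LinearMap.funLeft ℂ ℂ fun j => (i, j)) ∘ₗ Uᴴ.mulVecLin
  have hP (i v) : P i v = fun j => Uᴴ.mulVec v (i, j) := rfl
  -- `ℂᵖ ⊗ W`, cut out by requiring every row of `Uᴴ v` (as a `p × q` array) to lie in `W`.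
  let W' : Submodule ℂ (Fin n → ℂ) := ⨅ i, W.comap (P i)
  have hmem (v) : v ∈ W' ↔ ∀ i, P i v ∈ W := by simp [W']
  have hinv : RepInvariant ρ W' := by
    intro x v hv
    rw [hmem] at hv ⊢
    intro i
    have h1 : Uᴴ.mulVec ((ρ x).val.mulVec v) =
        ((σ x.1).val ⊗ₖ (τ x.2).val).mulVec (Uᴴ.mulVec v) := by
      simp only [Matrix.mulVec_mulVec]
      congr 1
      calc Uᴴ * (ρ x).val = Uᴴ * ((ρ x).val * U) * Uᴴ := by
            rw [Matrix.mul_assoc, Matrix.mul_assoc, hU', Matrix.mul_one]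
        _ = _ := by rw [hinter, ← Matrix.mul_assoc, hU, Matrix.one_mul]
    have h2 : P i ((ρ x).val.mulVec v) =
        ∑ k, (σ x.1).val i k • (τ x.2).val.mulVec (P k v) := by
      ext j
      rw [hP, h1]
      simp [hP, Matrix.mulVec, dotProduct, Fintype.sum_prod_type, Finset.mul_sum, mul_assoc]
    rw [h2]
    exact Submodule.sum_mem _ fun k _ => W.smul_mem _ (hW _ _ (hv k))
  -- `L w` is the image under `U` of `(1, …, 1) ⊗ w`.
  let L (w : Fin q → ℂ) : Fin n → ℂ := U.mulVec fun x => w x.2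
  have hL (i w) : P i (L w) = w := by
    ext j
    simp [hP, L, Matrix.mulVec_mulVec, hU]
  rcases hρ.2 W' hinv with h | h
  · left
    rw [Submodule.eq_bot_iff]
    intro w hw
    have h1 : L w ∈ W' := (hmem _).mpr fun i => (hL i w).symm ▸ hw
    rw [h, Submodule.mem_bot] at h1
    rw [← hL ⟨0, hp⟩ w, h1, map_zero]
  · right
    rw [Submodule.eq_top_iff']
    intro w
    have h1 : L w ∈ W' := h ▸ Submodule.mem_top
    exact hL ⟨0, hp⟩ w ▸ (hmem _).mp h1 ⟨0, hp⟩

/-- Every irreducible unitary representation of a product group `G × H`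
is unitarily equivalent to an external tensor product of irreducible unitary
representations of `G` and `H`. -/
theorem irreducible_of_product_eq_extTensor {G H : Type*} [Group G] [Group H] {n : ℕ}
    (hn : 1 ≤ n) (ρ : (G × H) →* Matrix.unitaryGroup (Fin n) ℂ)
    (hρ : RepIrreducible ρ) :
    ∃ (p q : ℕ) (_ : 1 ≤ p) (_ : 1 ≤ q) (hpq : p * q = n)
      (σ : G →* Matrix.unitaryGroup (Fin p) ℂ) (τ : H →* Matrix.unitaryGroup (Fin q) ℂ),
      RepIrreducible σ ∧ RepIrreducible τ ∧
      UnitarilyEquivalent ρ (transportRep hpq (extTensor σ τ)) := by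
  obtain ⟨p, q, σ, τ, U, hσ, hq, hU, hinter⟩ := exists_tensor_isometry hn ρ
  have hp := hσ.1
  have hinj := mulVec_injective_of_isometry hU
  have hinv : RepInvariant ρ (LinearMap.range U.mulVecLin) := by
    rintro x _ ⟨v, rfl⟩
    refine ⟨((σ x.1).val ⊗ₖ (τ x.2).val).mulVec v, ?_⟩
    simp only [Matrix.mulVecLin_apply, Matrix.mulVec_mulVec, hinter]
  have hfin : Module.finrank ℂ (LinearMap.range U.mulVecLin) = p * q := by
    rw [LinearMap.finrank_range_of_inj hinj]
    simp
  have hpq : p * q = n := by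
    rcases hρ.2 _ hinv with h | h
    · rw [h, finrank_bot] at hfin
      have := Nat.mul_pos hp hq
      omega
    · rw [h, finrank_top] at hfin
      simpa using hfin.symm
  subst hpq
  let A : Matrix (Fin (p * q)) (Fin (p * q)) ℂ := Uᴴ.submatrix finProdFinEquiv.symm id
  have hAstar : star A = U.submatrix id finProdFinEquiv.symm := by
    rw [Matrix.star_eq_conjTranspose, Matrix.conjTranspose_submatrix,
      Matrix.conjTranspose_conjTranspose]
  have hA : A * star A = 1 := by
    rw [hAstar, ← Matrix.submatrix_mul _ _ _ _ _ Function.bijective_id, hU,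
      Matrix.submatrix_one_equiv]
  have hU' : U * Uᴴ = 1 := by
    have h := mul_eq_one_comm.mp hA
    rwa [hAstar, Matrix.submatrix_mul_equiv, Matrix.submatrix_id_id] at h
  refine ⟨p, q, hp, hq, rfl, σ, τ, hσ, right_factor_irreducible hρ hp hq hU hU' hinter,
    ⟨A, Matrix.mem_unitaryGroup_iff.mpr hA⟩, fun x => Subtype.ext ?_⟩
  change ((σ x.1).val ⊗ₖ (τ x.2).val).submatrix finProdFinEquiv.symm finProdFinEquiv.symm =
    A * (ρ x).val * star A
  have h1 : (ρ x).val * star A = (U * ((σ x.1).val ⊗ₖ (τ x.2).val)).submatrix id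
      finProdFinEquiv.symm := by
    rw [hAstar, ← hinter]
    rfl
  rw [Matrix.mul_assoc, h1, ← Matrix.submatrix_mul _ _ _ _ _ Function.bijective_id,
    ← Matrix.mul_assoc, hU, Matrix.one_mul]
end

section
/- Let G and H be groups, and let ρ : G →* Matrix.unitaryGroup (Fin p) ℂ, σ : H →* Matrix.unitaryGroup (Fin q) ℂ, ρ' : G →* Matrix.unitaryGroup (Fin p') ℂ, σ' : H →* Matrix.unitaryGroup (Fin q') ℂ all be irreducible unitary representations with p * q = p' * q'. If the external tensor products ρ ⊠ σ and ρ' ⊠ σ' are unitarily equivalent as representations of G × H (after transporting along Fin (p*q) ≃ Fin (p'*q')), then p = p', q = q', ρ is unitarily equivalent to ρ', and σ is unitarily equivalent to σ'. -/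
/-!
Index the rows and columns of the given unitary equivalence by pairs, as a nonzero matrix `U` with
`(ρ' g ⊗ₖ σ' k) * U = U * (ρ g ⊗ₖ σ k)`. Fixing the second (resp. first) coordinates of the row and
column indices cuts `U` into blocks; taking `k = 1` (resp. `g = 1`) shows that each block intertwines
`ρ` with `ρ'` (resp. `σ` with `σ'`). Since `U ≠ 0`, some entry is nonzero, and the two blocks
containing it are nonzero intertwiners of irreducible representations. By Schur's lemma
(`unitarilyEquivalent_of_intertwiner`) they are, up to a positive scalar, unitary equivalences.
-/

open Matrix Kronecker

/-- Schur's lemma for unitary representations: a nonzero intertwiner `B` between irreducible ones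
is bijective, and `Bᴴ * B` commutes with `ρ`, hence is a positive scalar, so that a rescaling of `B`
is a unitary equivalence. -/
lemma unitarilyEquivalent_of_intertwiner {G : Type*} [Group G] {n m : ℕ}
    (ρ : G →* Matrix.unitaryGroup (Fin n) ℂ) (ρ' : G →* Matrix.unitaryGroup (Fin m) ℂ)
    (hρ : RepIrreducible ρ) (hρ' : RepIrreducible ρ')
    (B : Matrix (Fin m) (Fin n) ℂ) (hB : B ≠ 0)
    (hint : ∀ g, (ρ' g).val * B = B * (ρ g).val) :
    ∃ hp : n = m, UnitarilyEquivalent (transportRep hp ρ) ρ' := by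
  have hker : LinearMap.ker B.mulVecLin = ⊥ := by
    refine (hρ.2 (LinearMap.ker B.mulVecLin) ?_).resolve_right ?_
    · intro g v hv
      rw [LinearMap.mem_ker, Matrix.mulVecLin_apply] at hv ⊢
      rw [Matrix.mulVec_mulVec, ← hint, ← Matrix.mulVec_mulVec, hv, Matrix.mulVec_zero]
    · intro htop
      refine hB (Matrix.mulVec_injective (funext fun v => ?_))
      have hv : v ∈ LinearMap.ker B.mulVecLin := htop ▸ Submodule.mem_top
      simpa using hv
  have hrange : LinearMap.range B.mulVecLin = ⊤ := by
    refine (hρ'.2 (LinearMap.range B.mulVecLin) ?_).resolve_left ?_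
    · rintro g _ ⟨v, rfl⟩
      refine ⟨(ρ g).val.mulVec v, ?_⟩
      simp only [Matrix.mulVecLin_apply, Matrix.mulVec_mulVec, hint]
    · intro hbot
      refine hB (Matrix.mulVec_injective (funext fun v => ?_))
      have hv : B.mulVecLin v ∈ LinearMap.range B.mulVecLin := ⟨v, rfl⟩
      rw [hbot] at hv
      simpa using hv
  have hnm : n = m := by
    have hfin := (LinearEquiv.ofBijective B.mulVecLin
      ⟨LinearMap.ker_eq_bot.1 hker, LinearMap.range_eq_top.1 hrange⟩).finrank_eq
    simpa using hfin
  subst hnm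
  refine ⟨rfl, ?_⟩
  have hstar : ∀ g, (ρ g).val * Bᴴ = Bᴴ * (ρ' g).val := by
    intro g
    have hg := congrArg Matrix.conjTranspose (hint g⁻¹)
    rw [Matrix.conjTranspose_mul, Matrix.conjTranspose_mul, map_inv, map_inv] at hg
    have h1 : ((ρ g)⁻¹).valᴴ = (ρ g).val := by
      change ((ρ g).valᴴ)ᴴ = _
      exact Matrix.conjTranspose_conjTranspose _
    have h2 : ((ρ' g)⁻¹).valᴴ = (ρ' g).val := by
      change ((ρ' g).valᴴ)ᴴ = _
      exact Matrix.conjTranspose_conjTranspose _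
    rw [h1, h2] at hg
    exact hg.symm
  have hcomm : ∀ g, (ρ g).val * (Bᴴ * B) = (Bᴴ * B) * (ρ g).val := by
    intro g
    rw [← Matrix.mul_assoc, hstar, Matrix.mul_assoc, hint, Matrix.mul_assoc]
  have : Nonempty (Fin n) := ⟨⟨0, hρ.1⟩⟩
  obtain ⟨μ, hμ⟩ := Module.End.exists_eigenvalue (Bᴴ * B).mulVecLin
  have hmem : ∀ v, v ∈ Module.End.eigenspace (Bᴴ * B).mulVecLin μ ↔
      (Bᴴ * B).mulVec v = μ • v := by
    intro v
    rw [Module.End.mem_eigenspace_iff, Matrix.mulVecLin_apply]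
  have htop : Module.End.eigenspace (Bᴴ * B).mulVecLin μ = ⊤ := by
    refine (hρ.2 _ ?_).resolve_left hμ
    intro g v hv
    rw [hmem] at hv ⊢
    rw [Matrix.mulVec_mulVec, ← hcomm, ← Matrix.mulVec_mulVec, hv, Matrix.mulVec_smul]
  have hscal : Bᴴ * B = μ • (1 : Matrix (Fin n) (Fin n) ℂ) := by
    refine Matrix.mulVec_injective (funext fun v => ?_)
    have hv := (hmem v).1 (htop ▸ Submodule.mem_top)
    rw [hv, Matrix.smul_mulVec, Matrix.one_mulVec]
  -- A diagonal entry of `Bᴴ * B` exhibits `μ` as a sum of squared moduli.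
  have hreal : μ = ((∑ k, ‖B k ⟨0, hρ.1⟩‖ ^ 2 : ℝ) : ℂ) := by
    have h0 := congrFun (congrFun hscal ⟨0, hρ.1⟩) ⟨0, hρ.1⟩
    rw [Matrix.mul_apply] at h0
    simp only [Matrix.conjTranspose_apply, Matrix.smul_apply, Matrix.one_apply_eq, smul_eq_mul,
      mul_one] at h0
    rw [← h0]
    push_cast
    exact Finset.sum_congr rfl fun k _ => Complex.conj_mul' _
  have hμ0 : μ ≠ 0 := by
    rintro rfl
    rw [zero_smul] at hscal
    open scoped ComplexOrder in
    exact hB (Matrix.conjTranspose_mul_self_eq_zero.1 hscal)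
  set s : ℝ := ∑ k, ‖B k ⟨0, hρ.1⟩‖ ^ 2
  have hs0 : 0 ≤ s := Finset.sum_nonneg fun k _ => by positivity
  have hsq : ((Real.sqrt s : ℝ) : ℂ) * ((Real.sqrt s : ℝ) : ℂ) = μ := by
    rw [hreal, ← Complex.ofReal_mul, Real.mul_self_sqrt hs0]
  have hr0 : ((Real.sqrt s : ℝ) : ℂ) ≠ 0 := by
    intro h0
    rw [h0, zero_mul] at hsq
    exact hμ0 hsq.symm
  have hunit : star (((Real.sqrt s : ℝ) : ℂ)⁻¹ • B) * (((Real.sqrt s : ℝ) : ℂ)⁻¹ • B) = 1 := by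
    rw [Matrix.star_eq_conjTranspose, Matrix.conjTranspose_smul, Matrix.smul_mul, Matrix.mul_smul,
      hscal, smul_smul, smul_smul, ← hsq]
    have hc : star (((Real.sqrt s : ℝ) : ℂ)⁻¹) = ((Real.sqrt s : ℝ) : ℂ)⁻¹ := by
      simp
    rw [hc]
    have : (((Real.sqrt s : ℝ) : ℂ)⁻¹ * (((Real.sqrt s : ℝ) : ℂ)⁻¹ *
        (((Real.sqrt s : ℝ) : ℂ) * ((Real.sqrt s : ℝ) : ℂ)))) = 1 := by
      field_simp
    rw [mul_assoc, this, one_smul]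
  refine ⟨⟨((Real.sqrt s : ℝ) : ℂ)⁻¹ • B, Matrix.mem_unitaryGroup_iff'.2 hunit⟩, fun g => ?_⟩
  rw [eq_mul_inv_iff_mul_eq]
  apply Subtype.ext
  change (ρ' g).val * (((Real.sqrt s : ℝ) : ℂ)⁻¹ • B) = (((Real.sqrt s : ℝ) : ℂ)⁻¹ • B) * (ρ g).val
  rw [Matrix.mul_smul, Matrix.smul_mul, hint]

lemma transportRep_val {G : Type*} [Group G] {m n : ℕ} (h : m = n)
    (ρ : G →* Matrix.unitaryGroup (Fin m) ℂ) (g : G) :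
    (transportRep h ρ g).val = (ρ g).val.submatrix (finCongr h).symm (finCongr h).symm := by
  subst h
  rfl

/-- The unitary equivalence of external tensor products, with rows and columns indexed by pairs. -/
lemma exists_kronecker_intertwiner {G H : Type*} [Group G] [Group H] {p q p' q' : ℕ}
    (ρ : G →* Matrix.unitaryGroup (Fin p) ℂ) (σ : H →* Matrix.unitaryGroup (Fin q) ℂ)
    (ρ' : G →* Matrix.unitaryGroup (Fin p') ℂ) (σ' : H →* Matrix.unitaryGroup (Fin q') ℂ)
    (hρ' : 1 ≤ p') (hσ' : 1 ≤ q') (h : p * q = p' * q')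
    (heq : UnitarilyEquivalent (transportRep h (extTensor ρ σ)) (extTensor ρ' σ')) :
    ∃ U : Matrix (Fin p' × Fin q') (Fin p × Fin q) ℂ, U ≠ 0 ∧
      ∀ g k, ((ρ' g).val ⊗ₖ (σ' k).val) * U = U * ((ρ g).val ⊗ₖ (σ k).val) := by
  obtain ⟨A, hA⟩ := heq
  refine ⟨A.val.submatrix finProdFinEquiv (finProdFinEquiv.trans (finCongr h)), ?_, ?_⟩
  · intro h0
    have hA0 : A.val = 0 := by
      ext a b
      have hab := congrFun (congrFun h0 (finProdFinEquiv.symm a))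
        ((finProdFinEquiv.trans (finCongr h)).symm b)
      simpa only [Matrix.submatrix_apply, Equiv.apply_symm_apply, Matrix.zero_apply] using hab
    have h1 : star A.val * A.val = 1 := A.2.1
    rw [hA0, mul_zero] at h1
    have hpos : 0 < p' * q' := Nat.mul_pos hρ' hσ'
    have h2 := congrFun (congrFun h1 ⟨0, hpos⟩) ⟨0, hpos⟩
    simp at h2
  · intro g k
    have hgk := hA (g, k)
    rw [eq_mul_inv_iff_mul_eq] at hgk
    have hval : (extTensor ρ' σ' (g, k)).val * A.val =
        A.val * (transportRep h (extTensor ρ σ) (g, k)).val := congrArg Subtype.val hgk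
    rw [transportRep_val] at hval
    have hl : (ρ' g).val ⊗ₖ (σ' k).val =
        (extTensor ρ' σ' (g, k)).val.submatrix finProdFinEquiv finProdFinEquiv := by
      ext a b
      simp [extTensor, kroneckerUnitary]
    have hr : (ρ g).val ⊗ₖ (σ k).val =
        ((extTensor ρ σ (g, k)).val.submatrix (finCongr h).symm (finCongr h).symm).submatrix
          (finProdFinEquiv.trans (finCongr h)) (finProdFinEquiv.trans (finCongr h)) := by
      ext a b
      simp [extTensor, kroneckerUnitary]
    rw [hl, hr, Matrix.submatrix_mul_equiv, Matrix.submatrix_mul_equiv, hval]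

/-- The external tensor product decomposition of an irreducible unitary
representation of `G × H` is unique: if `ρ ⊠ σ` and `ρ' ⊠ σ'` are unitarily equivalent
(with all factors irreducible), then `p = p'`, `q = q'`, `ρ` is unitarily equivalent
to `ρ'` and `σ` is unitarily equivalent to `σ'`. -/
theorem extTensor_unitarilyEquivalent_unique {G H : Type*} [Group G] [Group H]
    {p q p' q' : ℕ}
    (ρ : G →* Matrix.unitaryGroup (Fin p) ℂ) (σ : H →* Matrix.unitaryGroup (Fin q) ℂ)
    (ρ' : G →* Matrix.unitaryGroup (Fin p') ℂ) (σ' : H →* Matrix.unitaryGroup (Fin q') ℂ)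
    (hρ : RepIrreducible ρ) (hσ : RepIrreducible σ)
    (hρ' : RepIrreducible ρ') (hσ' : RepIrreducible σ')
    (h : p * q = p' * q')
    (heq : UnitarilyEquivalent (transportRep h (extTensor ρ σ)) (extTensor ρ' σ')) :
    ∃ (hp : p = p') (hq : q = q'),
      UnitarilyEquivalent (transportRep hp ρ) ρ' ∧
      UnitarilyEquivalent (transportRep hq σ) σ' := by
  obtain ⟨U, hU, hint⟩ :=
    exists_kronecker_intertwiner ρ σ ρ' σ' hρ'.1 hσ'.1 h heq
  obtain ⟨⟨a', b'⟩, ⟨a, b⟩, hab⟩ : ∃ x y, U x y ≠ 0 := by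
    by_contra! hzero
    exact hU (Matrix.ext hzero)
  obtain ⟨hp, hpe⟩ := unitarilyEquivalent_of_intertwiner ρ ρ' hρ hρ'
    (Matrix.of fun i' i => U (i', b') (i, b))
    (fun h0 => hab (congrFun (congrFun h0 a') a)) (fun g => by
      ext i' i
      have hg := congrFun (congrFun (hint g 1) (i', b')) (i, b)
      simpa [Matrix.mul_apply, Fintype.sum_prod_type, Matrix.one_apply] using hg)
  obtain ⟨hq, hqe⟩ := unitarilyEquivalent_of_intertwiner σ σ' hσ hσ'
    (Matrix.of fun j' j => U (a', j') (a, j))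
    (fun h0 => hab (congrFun (congrFun h0 b') b)) (fun k => by
      ext j' j
      have hk := congrFun (congrFun (hint 1 k) (a', j')) (a, j)
      simpa [Matrix.mul_apply, Fintype.sum_prod_type_right, Matrix.one_apply] using hk)
  exact ⟨hp, hq, hpe, hqe⟩
end

section
/- Let G and H be groups, let V and W be nonzero finite-dimensional complex vector spaces, and let ρ : Representation ℂ G V and σ : Representation ℂ H W be representations. Let τ be the representation of G × H on V ⊗[ℂ] W given by τ (g, h) = TensorProduct.map (ρ g) (σ h). Then τ admits an invariant inner product if and only if ρ admits an invariant inner product and σ admits an invariant inner product. -/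
/-!
An invariant inner product `B` on `V ⊗ W` restricts to one on `V` along the injective map
`v ↦ v ⊗ w₀` for any fixed `w₀ ≠ 0`: this map intertwines `ρ g` with `τ (g, 1)`, so the pulled-back
form is `ρ`-invariant (`HasInvariantInner.comap`). The same works for `W`.

Conversely, invariant inner products on `V` and `W` make every `ρ g` and `σ h` an isometry, and
the tensor product of two isometries is an isometry for the tensor product inner product
`⟪v ⊗ w, v' ⊗ w'⟫ = ⟪v, v'⟫ ⟪w, w'⟫` (`hasInvariantInner_tensor_of_inner`).
-/

open scoped TensorProduct

/-- A representation `ρ` of `G` on a complex vector space `V` admits an invariant inner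
product: a conjugate-symmetric sesquilinear form (conjugate-linear in the first variable,
linear in the second), positive definite, preserved by every `ρ g`. -/
def HasInvariantInner {G V : Type*} [Group G] [AddCommGroup V] [Module ℂ V]
    (ρ : Representation ℂ G V) : Prop :=
  ∃ B : V → V → ℂ,
    (∀ v w : V, B w v = (starRingEnd ℂ) (B v w)) ∧
    (∀ v w w' : V, B v (w + w') = B v w + B v w') ∧
    (∀ (c : ℂ) (v w : V), B v (c • w) = c * B v w) ∧
    (∀ v v' w : V, B (v + v') w = B v w + B v' w) ∧
    (∀ (c : ℂ) (v w : V), B (c • v) w = (starRingEnd ℂ) c * B v w) ∧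
    (∀ v : V, v ≠ 0 → 0 < (B v v).re) ∧
    (∀ (g : G) (v w : V), B (ρ g v) (ρ g w) = B v w)

/-- An invariant inner product pulls back along an injective linear map which is equivariant with
respect to some map of groups `φ`; `φ` need not be a homomorphism. -/
lemma HasInvariantInner.comap {G K V U : Type*} [Group G] [Group K]
    [AddCommGroup V] [Module ℂ V] [AddCommGroup U] [Module ℂ U]
    {ρ : Representation ℂ G V} {τ : Representation ℂ K U} (hB : HasInvariantInner τ)
    (f : V →ₗ[ℂ] U) (hf : ∀ v, f v = 0 → v = 0)
    (φ : G → K) (hφ : ∀ g v, f (ρ g v) = τ (φ g) (f v)) : HasInvariantInner ρ := by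
  obtain ⟨B, hsymm, hadd, hsmul, hadd', hsmul', hpos, hinv⟩ := hB
  refine ⟨fun v w => B (f v) (f w), fun v w => hsymm _ _, fun v w w' => ?_, fun c v w => ?_,
    fun v v' w => ?_, fun c v w => ?_, fun v hv => hpos _ fun h => hv (hf v h), fun g v w => ?_⟩
  · simp only [map_add, hadd]
  · simp only [map_smul, hsmul]
  · simp only [map_add, hadd']
  · simp only [map_smul, hsmul']
  · simp only [hφ, hinv]

lemma hasInvariantInner_tensor_of_inner {G H V W : Type*} [Group G] [Group H]
    [NormedAddCommGroup V] [InnerProductSpace ℂ V] [NormedAddCommGroup W] [InnerProductSpace ℂ W]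
    (ρ : Representation ℂ G V) (σ : Representation ℂ H W)
    (τ : Representation ℂ (G × H) (V ⊗[ℂ] W))
    (hτ : ∀ (g : G) (h : H), τ (g, h) = TensorProduct.map (ρ g) (σ h))
    (hρ : ∀ g v w, inner ℂ (ρ g v) (ρ g w) = inner ℂ v w)
    (hσ : ∀ h v w, inner ℂ (σ h v) (σ h w) = inner ℂ v w) :
    HasInvariantInner τ := by
  refine ⟨fun x y => inner ℂ x y, fun v w => (inner_conj_symm (𝕜 := ℂ) w v).symm,
    fun v w w' => inner_add_right (𝕜 := ℂ) v w w', fun c v w => inner_smul_right (𝕜 := ℂ) v w c,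
    fun v v' w => inner_add_left (𝕜 := ℂ) v v' w, fun c v w => inner_smul_left (𝕜 := ℂ) v w c,
    fun v hv => ?_, ?_⟩
  · exact (pow_pos (norm_pos_iff.mpr hv) 2).trans_eq (inner_self_eq_norm_sq (𝕜 := ℂ) v).symm
  · rintro ⟨g, h⟩ v w
    rw [hτ]
    exact TensorProduct.inner_map_map ((ρ g).isometryOfInner (hρ g)) ((σ h).isometryOfInner (hσ h))
      v w

/-- The inner product space core packaged in `HasInvariantInner`. -/
lemma HasInvariantInner.exists_core {G V : Type*} [Group G] [AddCommGroup V] [Module ℂ V]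
    {ρ : Representation ℂ G V} (h : HasInvariantInner ρ) :
    ∃ c : InnerProductSpace.Core ℂ V, ∀ g v w, c.inner (ρ g v) (ρ g w) = c.inner v w := by
  obtain ⟨B, hsymm, hadd, hsmul, hadd', hsmul', hpos, hinv⟩ := h
  have hzero : B 0 0 = 0 := by simpa using hsmul 0 0 0
  refine ⟨{ inner := B
            conj_inner_symm := fun x y => (hsymm y x).symm
            re_inner_nonneg := fun x => ?_
            add_left := hadd'
            smul_left := fun x y r => hsmul' r x y
            definite := fun x hx => ?_ }, hinv⟩
  · by_cases hx : x = 0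
    · simp [hx, hzero]
    · exact (hpos x hx).le
  · by_contra hne
    have hlt := hpos x hne
    have hx' : B x x = 0 := hx
    simp [hx'] at hlt

/-- Over a field, a pure tensor vanishes only if one of its factors does: apply `v ⊗ w ↦ f(w) v`
for a functional `f` with `f(w) ≠ 0`. -/
lemma left_eq_zero_of_tmul_eq_zero {V W : Type*} [AddCommGroup V] [Module ℂ V]
    [AddCommGroup W] [Module ℂ W] {v : V} {w : W} (h : v ⊗ₜ[ℂ] w = 0) (hw : w ≠ 0) : v = 0 := by
  obtain ⟨f, hf⟩ : ∃ f : Module.Dual ℂ W, f w ≠ 0 := by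
    by_contra! hall
    exact hw ((Module.forall_dual_apply_eq_zero_iff ℂ w).mp hall)
  have h' := congrArg (fun x => TensorProduct.rid ℂ V (f.lTensor V x)) h
  simpa [hf] using h'

/-- For nonzero finite-dimensional representations `ρ` of `G` on `V` and
`σ` of `H` on `W`, the tensor-product representation of `G × H` on `V ⊗[ℂ] W` admits an
invariant inner product if and only if both `ρ` and `σ` do. -/
theorem tensor_hasInvariantInner_iff {G H V W : Type*} [Group G] [Group H]
    [AddCommGroup V] [Module ℂ V] [AddCommGroup W] [Module ℂ W]
    [Nontrivial V] [Nontrivial W] [FiniteDimensional ℂ V] [FiniteDimensional ℂ W]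
    (ρ : Representation ℂ G V) (σ : Representation ℂ H W)
    (τ : Representation ℂ (G × H) (V ⊗[ℂ] W))
    (hτ : ∀ (g : G) (h : H), τ (g, h) = TensorProduct.map (ρ g) (σ h)) :
    HasInvariantInner τ ↔ HasInvariantInner ρ ∧ HasInvariantInner σ := by
  constructor
  · intro hB
    obtain ⟨v₀, hv₀⟩ := exists_ne (0 : V)
    obtain ⟨w₀, hw₀⟩ := exists_ne (0 : W)
    refine ⟨hB.comap ((TensorProduct.mk ℂ V W).flip w₀) (fun v hv => ?_) (fun g => (g, 1))
      (fun g v => by simp [hτ]), hB.comap (TensorProduct.mk ℂ V W v₀) (fun w hw => ?_)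
      (fun h => (1, h)) (fun h w => by simp [hτ])⟩
    · exact left_eq_zero_of_tmul_eq_zero hv hw₀
    · refine left_eq_zero_of_tmul_eq_zero (w := v₀) ?_ hv₀
      simpa using congrArg (TensorProduct.comm ℂ V W) hw
  · rintro ⟨hρ, hσ⟩
    obtain ⟨cV, hV⟩ := hρ.exists_core
    obtain ⟨cW, hW⟩ := hσ.exists_core
    exact @hasInvariantInner_tensor_of_inner G H V W _ _ cV.toNormedAddCommGroup
      (InnerProductSpace.ofCore cV.toCore) cW.toNormedAddCommGroup
      (InnerProductSpace.ofCore cW.toCore) ρ σ τ hτ hV hW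
end

section
/- Let G be a group, n ≥ 1, and let ρ : G →* Matrix.unitaryGroup (Fin n) ℂ be a unitary representation. Then ρ is reducible (i.e., there exists an invariant ℂ-submodule W of ℂⁿ with W ≠ ⊥ and W ≠ ⊤) if and only if there exists A ∈ Matrix.unitaryGroup (Fin n) ℂ such that (A : Matrix (Fin n) (Fin n) ℂ) * (ρ g).val = (ρ g).val * (A : Matrix (Fin n) (Fin n) ℂ) for all g ∈ G and A is not a scalar matrix, i.e., there is no λ ∈ ℂ with (A : Matrix (Fin n) (Fin n) ℂ) = λ • 1. (Thus the subspace Sum(G,n) of reducible representations in Hom(G, U(n)) is exactly the set of points at which the conjugation action of PU(n) fails to be free.) -/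
/-!
If `W` is a proper nonzero invariant subspace, let `P` be the orthogonal projection onto `W`.
Invariance says `P * ρ g * P = ρ g * P` for all `g`; taking adjoints and using
`(ρ g)ᴴ = ρ g⁻¹` gives `P * ρ g * P = P * ρ g`, so `P` commutes with `ρ`. The reflection
`2 • P - 1` is then a unitary commuting with `ρ`, and it is not scalar because `P ≠ 0, 1`.

Conversely, a non-scalar matrix commuting with `ρ` has an eigenvalue, and the corresponding
eigenspace is invariant, nonzero and proper (Schur's lemma).
-/

open Matrix Kronecker

/-- A unitary representation is reducible if it has an invariant submodule other than
`⊥` and `⊤`. -/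
def RepReducible {G : Type*} [Group G] {n : ℕ}
    (ρ : G →* Matrix.unitaryGroup (Fin n) ℂ) : Prop :=
  ∃ W : Submodule ℂ (Fin n → ℂ), RepInvariant ρ W ∧ W ≠ ⊥ ∧ W ≠ ⊤

/-- The matrix of the orthogonal projection onto `W`, characterised as a self-adjoint
idempotent whose fixed vectors are exactly the elements of `W`. -/
theorem exists_orthogonalProjection_matrix {n : ℕ} (W : Submodule ℂ (Fin n → ℂ)) :
    ∃ P : Matrix (Fin n) (Fin n) ℂ, Pᴴ = P ∧ P * P = P ∧ ∀ v, P *ᵥ v = v ↔ v ∈ W := by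
  let K : Submodule ℂ (EuclideanSpace ℂ (Fin n)) :=
    W.comap (WithLp.linearEquiv 2 ℂ (Fin n → ℂ)).toLinearMap
  let e := Matrix.toEuclideanCLM (n := Fin n) (𝕜 := ℂ)
  have hK : IsStarProjection K.starProjection := isStarProjection_starProjection
  refine ⟨e.symm K.starProjection, ?_, ?_, fun v => ?_⟩
  · exact (map_star e.symm K.starProjection).symm.trans (congrArg e.symm hK.isSelfAdjoint.star_eq)
  · rw [← map_mul, hK.isIdempotentElem.eq]
  · have h : WithLp.toLp 2 (e.symm K.starProjection *ᵥ v)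
        = K.starProjection (WithLp.toLp 2 v) := by
      rw [← Matrix.toEuclideanCLM_toLp]
      exact congrArg (fun T => T (WithLp.toLp 2 v)) (e.apply_symm_apply K.starProjection)
    rw [← (WithLp.toLp_injective 2).eq_iff, h, Submodule.starProjection_eq_self_iff]
    rfl

/-- A self-adjoint idempotent whose range is invariant commutes with the representation. -/
theorem projection_commute_of_repInvariant {G : Type*} [Group G] {n : ℕ}
    {ρ : G →* Matrix.unitaryGroup (Fin n) ℂ} {W : Submodule ℂ (Fin n → ℂ)}
    (hW : RepInvariant ρ W) {P : Matrix (Fin n) (Fin n) ℂ} (hs : Pᴴ = P) (hi : P * P = P)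
    (hP : ∀ v, P *ᵥ v = v ↔ v ∈ W) (g : G) : P * (ρ g).val = (ρ g).val * P := by
  have key : ∀ g, P * ((ρ g).val * P) = (ρ g).val * P := fun g => by
    refine Matrix.ext_of_mulVec_single fun i => ?_
    rw [← Matrix.mulVec_mulVec, hP, ← Matrix.mulVec_mulVec]
    exact hW g _ ((hP _).1 (by rw [Matrix.mulVec_mulVec, hi]))
  have hinv : ((ρ g⁻¹).val)ᴴ = (ρ g).val := by
    rw [map_inv, Matrix.UnitaryGroup.inv_val, ← Matrix.star_eq_conjTranspose, star_star]
  have h := congrArg Matrix.conjTranspose (key g⁻¹)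
  simp only [Matrix.conjTranspose_mul, hs, hinv] at h
  rw [← h, Matrix.mul_assoc, key g]

/-- A unitary representation is reducible if and only if some unitary
matrix that is not a scalar matrix commutes with the whole image of the representation;
i.e. the reducible locus is exactly where the conjugation `PU(n)`-action fails to be
free. -/
theorem repReducible_iff_exists_nonscalar_commutant {G : Type*} [Group G] {n : ℕ}
    (hn : 1 ≤ n) (ρ : G →* Matrix.unitaryGroup (Fin n) ℂ) :
    RepReducible ρ ↔
      ∃ A : Matrix.unitaryGroup (Fin n) ℂ,
        (∀ g : G, (A : Matrix (Fin n) (Fin n) ℂ) * (ρ g).val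
          = (ρ g).val * (A : Matrix (Fin n) (Fin n) ℂ)) ∧
        ¬ ∃ lam : ℂ, (A : Matrix (Fin n) (Fin n) ℂ) = lam • (1 : Matrix (Fin n) (Fin n) ℂ) := by
  constructor
  · rintro ⟨W, hW, hbot, htop⟩
    obtain ⟨P, hs, hi, hP⟩ := exists_orthogonalProjection_matrix W
    have hU : (2 * P - 1) * (2 * P - 1) = 1 := by
      have : (2 * P - 1) * (2 * P - 1) = 4 * (P * P) - 4 * P + 1 := by noncomm_ring
      rw [this, hi, sub_self, zero_add]
    have hstar : star (2 * P - 1) = 2 * P - 1 := by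
      have : (2 : Matrix (Fin n) (Fin n) ℂ) * P = P + P := two_mul P
      rw [this, star_sub, star_add, star_one, Matrix.star_eq_conjTranspose, hs]
    refine ⟨⟨2 * P - 1, Matrix.mem_unitaryGroup_iff.2 (by rw [hstar, hU])⟩, fun g => ?_, ?_⟩
    · have h := projection_commute_of_repInvariant hW hs hi hP g
      simp only [two_mul, sub_mul, add_mul, mul_sub, mul_add, h, one_mul, mul_one]
    · rintro ⟨c, hc⟩
      replace hc : P + P - 1 = c • (1 : Matrix (Fin n) (Fin n) ℂ) := by
        rw [← two_mul]; exact hc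
      have hv : ∀ v, P *ᵥ v + P *ᵥ v - v = c • v := fun v => by
        have := congrArg (· *ᵥ v) hc
        simpa [Matrix.sub_mulVec, Matrix.add_mulVec, Matrix.smul_mulVec] using this
      -- A nonzero vector of `W` is fixed by the reflection, which forces the scalar to be `1`.
      obtain ⟨w, hw, hw0⟩ := Submodule.exists_mem_ne_zero_of_ne_bot hbot
      have h1 := hv w
      rw [(hP w).2 hw, add_sub_cancel_right] at h1
      have hc1 : c = 1 := smul_left_injective ℂ hw0 (by simpa using h1.symm)
      refine htop (Submodule.eq_top_iff'.2 fun v => (hP v).1 ?_)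
      have h2 := hv v
      rw [hc1, one_smul, sub_eq_iff_eq_add, ← two_smul ℂ, ← two_smul ℂ] at h2
      exact smul_right_injective _ (two_ne_zero' ℂ) h2
  · rintro ⟨A, hA, hns⟩
    have : Nonempty (Fin n) := ⟨⟨0, hn⟩⟩
    obtain ⟨c, hc⟩ := Module.End.exists_eigenvalue (Matrix.toLin' A.val)
    have hmem : ∀ v, v ∈ Module.End.eigenspace (Matrix.toLin' A.val) c ↔ A.val *ᵥ v = c • v :=
      fun v => by rw [Module.End.mem_eigenspace_iff, Matrix.toLin'_apply]
    refine ⟨Module.End.eigenspace (Matrix.toLin' A.val) c, fun g v hv => ?_, hc, fun htop => ?_⟩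
    · rw [hmem] at hv ⊢
      rw [Matrix.mulVec_mulVec, hA g, ← Matrix.mulVec_mulVec, hv, Matrix.mulVec_smul]
    · refine hns ⟨c, Matrix.ext_of_mulVec_single fun i => ?_⟩
      rw [(hmem _).1 (htop ▸ Submodule.mem_top), Matrix.smul_mulVec, Matrix.one_mulVec]
end
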